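/- Let H be a nonnegative harmonic function on the upper half-plane. If there exists a constant C > 0 such that H(x,y) ≤ C·y for all x ∈ ℝ and y > 0 (i.e. the quotient H(x,y)/y is uniformly bounded), then there exists a real number α ≥ 0 such that H(x,y) = α·y for all x ∈ ℝ and y > 0. -/

import Mathlib

/-- The open upper half-plane `𝐇² = {(x,y) : y > 0}` viewed inside `ℝ × ℝ`. -/
def UpperHalfSet : Set (ℝ × ℝ) := {p : ℝ × ℝ | 0 < p.2}

/-- `H : ℝ → ℝ → ℝ` is harmonic on the upper half-plane: it is twice continuously
differentiable there and satisfies `∂²H/∂x² + ∂²H/∂y² = 0` at every point with `y > 0`. -/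
def HarmonicOnUpperHalf (H : ℝ → ℝ → ℝ) : Prop :=
  ContDiffOn ℝ 2 (fun p : ℝ × ℝ => H p.1 p.2) UpperHalfSet ∧
  ∀ x y : ℝ, 0 < y →
    iteratedDeriv 2 (fun s => H s y) x + iteratedDeriv 2 (fun t => H x t) y = 0

/-!
Since `|H(x, y)| ≤ C y`, the Borel–Carathéodory estimate on the disc of radius `y` about `(x, y)`
bounds the difference `H(x + h, y) - H(x, y)` by a constant multiple of `|h|` when `|h| ≤ y / 2`;
for smaller `y` the hypothesis itself gives such a bound. This difference is harmonic and at most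
`2 C y`, so it is nonpositive by a Phragmén–Lindelöf argument: `ε + η log |z + i|` dominates it on
the boundary of large discs in the half-plane, and `η` and `ε` tend to `0`. Applying this to `h`
and `-h` shows that `H` depends on `y` alone. Hence `H` is affine in `y`, and the bound by `C y`
removes the constant term.
-/

open Complex Metric Set InnerProductSpace Filter Topology Laplacian
open UpperHalfPlane (upperHalfPlaneSet isOpen_upperHalfPlaneSet)

theorem iteratedDeriv_comp_add_smul {𝕜 E F : Type*} [NontriviallyNormedField 𝕜]
    [NormedAddCommGroup E] [NormedSpace 𝕜 E] [NormedAddCommGroup F] [NormedSpace 𝕜 F]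
    {f : E → F} {p v : E} {s : 𝕜} {n : ℕ} (hf : ContDiffAt 𝕜 n f (p + s • v)) :
    iteratedDeriv n (fun t ↦ f (p + t • v)) s = iteratedFDeriv 𝕜 n f (p + s • v) fun _ ↦ v := by
  let line := ContinuousLinearMap.toSpanSingleton 𝕜 v
  have hfp : ContDiffAt 𝕜 n (fun z ↦ f (p + z)) (line s) :=
    ContDiffAt.comp (line s) hf (contDiffAt_const.add contDiffAt_id)
  obtain ⟨u, hu, hsu, hfu⟩ := hfp.contDiffOn' le_rfl (by simp)
  rw [insert_eq_of_mem (mem_univ _), univ_inter] at hfu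
  have hpre : IsOpen (line ⁻¹' u) := hu.preimage line.continuous
  have hcomp := line.iteratedFDerivWithin_comp_right hfu hu.uniqueDiffOn hpre.uniqueDiffOn hsu
    le_rfl
  rw [iteratedFDerivWithin_of_isOpen n hpre hsu, iteratedFDerivWithin_of_isOpen n hu hsu,
    iteratedFDeriv_comp_add_left] at hcomp
  simpa [iteratedDeriv_eq_iteratedFDeriv, line, Function.comp_def] using
    congr($hcomp fun _ ↦ (1 : 𝕜))

theorem laplacian_eq_iteratedDeriv_two_add {F : Type*} [NormedAddCommGroup F] [NormedSpace ℝ F]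
    {f : ℂ → F} {z : ℂ} (hf : ContDiffAt ℝ 2 f z) :
    Δ f z = iteratedDeriv 2 (fun s : ℝ ↦ f (s + z.im * I)) z.re +
      iteratedDeriv 2 (fun t : ℝ ↦ f (z.re + t * I)) z.im := by
  have diag (v : ℂ) : ![v, v] = fun _ ↦ v := by
    simp only [Matrix.cons_fin_one, Matrix.vecCons_const]
  have hre : z.im * I + z.re • (1 : ℂ) = z := by apply Complex.ext <;> simp
  have him : z.re + z.im • I = z := by apply Complex.ext <;> simp
  have hxx := iteratedDeriv_comp_add_smul (n := 2) (hre.symm ▸ hf)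
  have hyy := iteratedDeriv_comp_add_smul (n := 2) (him.symm ▸ hf)
  rw [hre] at hxx
  rw [him] at hyy
  simp only [laplacian_eq_iteratedFDeriv_complexPlane, diag, ← hxx, ← hyy]
  simp [add_comm]

theorem exists_eq_smul_add_of_iteratedDeriv_two_eq_zero {𝕜 E : Type*} [RCLike 𝕜]
    [NormedAddCommGroup E] [NormedSpace 𝕜 E] {f : 𝕜 → E} {s : Set 𝕜} (hs : IsOpen s)
    (hs' : IsPreconnected s) (hf : ContDiffOn 𝕜 2 f s)
    (hf'' : ∀ x ∈ s, iteratedDeriv 2 f x = 0) : ∃ a b, ∀ x ∈ s, f x = x • a + b := by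
  obtain ⟨a, ha⟩ := hs.exists_is_const_of_deriv_eq_zero hs'
    ((hf.deriv_of_isOpen (m := 1) hs (by norm_num)).differentiableOn one_ne_zero)
    (fun x hx ↦ by simpa [iteratedDeriv_succ] using hf'' x hx)
  obtain ⟨b, hb⟩ := hs.exists_eq_add_of_deriv_eq hs' (g := fun x ↦ x • a)
    (hf.differentiableOn two_ne_zero) (by fun_prop)
    (fun x hx ↦ by simp [ha x hx, deriv_smul_const])
  exact ⟨a, b, hb⟩

theorem eq_zero_of_forall_abs_mul_add_le_mul {a b C : ℝ} (h : ∀ y > 0, |y * a + b| ≤ C * y) :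
    b = 0 := by
  have hlim : Tendsto (fun y ↦ C * y - |y * a + b|) (𝓝[>] 0) (𝓝 (-|b|)) :=
    (Continuous.tendsto' (by fun_prop) _ _ (by simp)).mono_left nhdsWithin_le_nhds
  have hb := ge_of_tendsto hlim (eventually_mem_nhdsWithin.mono fun y hy ↦ sub_nonneg.2 (h y hy))
  exact abs_nonpos_iff.1 (neg_nonneg.1 hb)

theorem harmonicAt_comp_add_right {E F : Type*} [NormedAddCommGroup E] [InnerProductSpace ℝ E]
    [FiniteDimensional ℝ E] [NormedAddCommGroup F] [NormedSpace ℝ F] {f : E → F} {x a : E}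
    (hf : HarmonicAt f (x + a)) : HarmonicAt (fun z ↦ f (z + a)) x := by
  have hadd : Tendsto (· + a) (𝓝 x) (𝓝 (x + a)) := (continuous_add_const a).tendsto x
  refine ⟨ContDiffAt.comp x hf.1 (by fun_prop), ?_⟩
  filter_upwards [hadd.eventually hf.2] with z hz
  simpa [laplacian_eq_iteratedFDeriv_stdOrthonormalBasis, iteratedFDeriv_comp_add_right] using hz

theorem nonneg_on_ball_of_nonneg_on_sphere {f : ℂ → ℝ} {c w : ℂ} {R : ℝ}
    (hf : HarmonicContOnCl f (ball c R)) (hsphere : ∀ z ∈ sphere c R, 0 ≤ f z)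
    (hw : w ∈ ball c R) : 0 ≤ f w := by
  rw [← hf.circleAverage_poissonKernel_smul hw]
  refine Real.circleAverage_nonneg_of_nonneg fun z hz ↦ ?_
  rw [abs_of_pos (pos_of_mem_ball hw)] at hz
  have hwz : ‖w - c‖ ≤ ‖z - c‖ := by
    rw [mem_sphere_iff_norm.1 hz]; exact (mem_ball_iff_norm.1 hw).le
  have hker : 0 ≤ poissonKernel c w z := by
    rw [poissonKernel_def]
    have := pow_le_pow_left₀ (norm_nonneg _) hwz 2
    exact div_nonneg (sub_nonneg.2 this) (by positivity)
  exact mul_nonneg hker (hsphere z hz)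

theorem sub_le_of_forall_mem_ball_sub_le {f : ℂ → ℝ} {c w : ℂ} {R M : ℝ}
    (hf : HarmonicOnNhd f (ball c R)) (hM : 0 < M) (hle : ∀ z ∈ ball c R, f z - f c ≤ M)
    (hw : w ∈ ball c R) : f w - f c ≤ 2 * M * ‖w - c‖ / (R - ‖w - c‖) := by
  obtain ⟨F, hF, hre⟩ := hf.exists_analyticOnNhd_ball_re_eq
  have hR : 0 < R := pos_of_mem_ball hw
  have hmem {z : ℂ} (hz : z ∈ ball 0 R) : c + z ∈ ball c R := by simpa using hz
  have hre' {z : ℂ} (hz : z ∈ ball c R) : (F z).re = f z := hre hz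
  have hdiff : DifferentiableOn ℂ (fun z ↦ F (c + z) - F c) (ball 0 R) :=
    (hF.differentiableOn.comp (by fun_prop) fun z hz ↦ hmem hz).sub_const _
  have hbound := borelCaratheodory_zero hM hdiff
    (fun z hz ↦ by simpa [hre' (hmem hz), hre' (mem_ball_self hR)] using hle _ (hmem hz))
    hR (z := w - c) (by simpa [dist_eq_norm] using hw) (by simp)
  calc f w - f c = (F (c + (w - c)) - F c).re := by
        simp [hre' hw, hre' (mem_ball_self hR)]
    _ ≤ ‖F (c + (w - c)) - F c‖ := re_le_norm _
    _ ≤ _ := hbound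

theorem norm_sub_add_mul_I_sq (z : ℂ) (t R : ℝ) :
    ‖z - (t + R) * I‖ ^ 2 = ‖z - t * I‖ ^ 2 - 2 * R * (z.im - t) + R ^ 2 := by
  simp only [← normSq_eq_norm_sq, normSq_apply, sub_re, mul_re, add_re, ofReal_re, I_re, mul_zero,
    add_im, ofReal_im, add_zero, I_im, mul_one, sub_self, sub_zero, sub_im, mul_im]
  ring

theorem harmonicAt_log_norm_add_I {z : ℂ} (hz : 0 < z.im) :
    HarmonicAt (fun w : ℂ ↦ Real.log ‖w + I‖) z := by
  refine AnalyticAt.harmonicAt_log_norm (f := fun w ↦ w + I) (by fun_prop) fun h ↦ ?_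
  have : z.im + 1 = 0 := by simpa using congr(($h).im)
  linarith

theorem exists_ball_mem_and_le_norm_add_I_on_sphere {z : ℂ} (hz : z ∈ upperHalfPlaneSet)
    {δ : ℝ} (hδ : 0 < δ) (K : ℝ) :
    ∃ c R, z ∈ ball c R ∧ closedBall c R ⊆ upperHalfPlaneSet ∧
      ∀ w ∈ sphere c R, δ ≤ w.im → K ≤ ‖w + I‖ := by
  obtain ⟨t, ht, htm⟩ : ∃ t, 0 < t ∧ t < min (δ / 2) z.im :=
    exists_between (lt_min (half_pos hδ) hz)
  obtain ⟨htδ, htz⟩ := lt_min_iff.1 htm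
  obtain ⟨R, hR, hRz, hRK⟩ : ∃ R > 0,
      ‖z - t * I‖ ^ 2 < R * (2 * (z.im - t)) ∧ K ^ 2 ≤ R * δ :=
    ((eventually_gt_atTop 0).and <|
      ((tendsto_id.atTop_mul_const (by linarith)).eventually_gt_atTop _).and <|
      (tendsto_id.atTop_mul_const hδ).eventually_ge_atTop _).exists
  have im_ge {w : ℂ} (hw : w ∈ closedBall ((t + R) * I) R) : t ≤ w.im := by
    have := (abs_im_le_norm _).trans (mem_closedBall_iff_norm.1 hw)
    simp only [sub_im, mul_I_im, add_re, ofReal_re, abs_le] at this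
    linarith
  -- Tangency to `im w = t` gives `‖w - t * I‖ ^ 2 = 2 * R * (w.im - t)` on the boundary circle.
  refine ⟨(t + R) * I, R, ?_, fun w hw ↦ ht.trans_le (im_ge hw), fun w hw hwδ ↦ ?_⟩
  · refine mem_ball_iff_norm.2 (lt_of_pow_lt_pow_left₀ 2 hR.le ?_)
    rw [norm_sub_add_mul_I_sq]
    linarith
  · have hsphere := norm_sub_add_mul_I_sq w t R
    rw [mem_sphere_iff_norm.1 hw] at hsphere
    refine le_of_sq_le_sq ?_ (norm_nonneg _)
    calc K ^ 2 ≤ R * δ := hRK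
      _ ≤ R * (2 * (w.im - t)) := by gcongr; linarith
      _ = ‖w - t * I‖ ^ 2 := by linarith
      _ ≤ ‖w + I‖ ^ 2 := by
        simp only [← normSq_eq_norm_sq, normSq_apply, sub_re, mul_re, ofReal_re, I_re, mul_zero,
          ofReal_im, I_im, mul_one, sub_self, sub_zero, sub_im, mul_im, add_zero, add_re, add_im]
        nlinarith [im_ge (sphere_subset_closedBall hw)]

theorem le_add_mul_log_norm_add_I {u : ℂ → ℝ} {M ε δ η : ℝ}
    (hu : HarmonicOnNhd u upperHalfPlaneSet) (hM : ∀ z ∈ upperHalfPlaneSet, u z ≤ M)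
    (hδ : 0 < δ) (hε : ∀ z ∈ upperHalfPlaneSet, z.im < δ → u z ≤ ε) (hη : 0 < η)
    {z : ℂ} (hz : z ∈ upperHalfPlaneSet) : u z ≤ ε + η * Real.log ‖z + I‖ := by
  obtain ⟨c, R, hzball, hball, hsphere⟩ :=
    exists_ball_mem_and_le_norm_add_I_on_sphere hz hδ (Real.exp ((M - ε) / η))
  have hbarrier : HarmonicOnNhd (fun w ↦ ε + η * Real.log ‖w + I‖ - u w) (closedBall c R) :=
    fun w hw ↦ ((harmonicAt_const ε).add
      (harmonicAt_log_norm_add_I (hball hw)).const_smul).sub (hu w (hball hw))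
  refine sub_nonneg.1 <| nonneg_on_ball_of_nonneg_on_sphere
    (hbarrier.mono closure_ball_subset_closedBall).harmonicContOnCl (fun w hw ↦ ?_) hzball
  have hw_im : 0 < w.im := hball (sphere_subset_closedBall hw)
  refine sub_nonneg.2 ?_
  rcases lt_or_ge w.im δ with hwδ | hwδ
  · have hone : 1 ≤ ‖w + I‖ := (by simpa using hw_im.le : 1 ≤ (w + I).im).trans (im_le_norm _)
    have := mul_nonneg hη.le (Real.log_nonneg hone)
    linarith [hε w hw_im hwδ]
  · have hexp := hsphere w hw hwδ
    have hlog := (div_le_iff₀' hη).1 <|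
      (Real.le_log_iff_exp_le ((Real.exp_pos _).trans_le hexp)).2 hexp
    linarith [hM w hw_im]

theorem nonpos_of_forall_le_of_boundary_le {u : ℂ → ℝ} {M : ℝ}
    (hu : HarmonicOnNhd u upperHalfPlaneSet) (hM : ∀ z ∈ upperHalfPlaneSet, u z ≤ M)
    (hbdry : ∀ ε > 0, ∃ δ > 0, ∀ z ∈ upperHalfPlaneSet, z.im < δ → u z ≤ ε)
    {z : ℂ} (hz : z ∈ upperHalfPlaneSet) : u z ≤ 0 := by
  refine le_of_forall_pos_le_add fun ε hε ↦ ?_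
  obtain ⟨δ, hδ, hle⟩ := hbdry ε hε
  have hlim : Tendsto (fun η ↦ ε + η * Real.log ‖z + I‖) (𝓝[>] 0) (𝓝 (0 + ε)) :=
    tendsto_nhdsWithin_of_tendsto_nhds (Continuous.tendsto' (by fun_prop) _ _ (by simp))
  refine ge_of_tendsto hlim ?_
  filter_upwards [self_mem_nhdsWithin] with η hη
  exact le_add_mul_log_norm_add_I hu hM hδ hle hη hz

section LinearGrowth

variable {f : ℂ → ℝ} {C : ℝ}

theorem translate_sub_le_of_abs_le_mul_im (hf : HarmonicOnNhd f upperHalfPlaneSet)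
    (hbd : ∀ z ∈ upperHalfPlaneSet, |f z| ≤ C * z.im) (h : ℝ) {z : ℂ}
    (hz : z ∈ upperHalfPlaneSet) : f (z + h) - f z ≤ 4 * (3 * C + 1) * |h| := by
  have hz0 : 0 < z.im := hz
  have hCz : 0 ≤ C * z.im := (abs_nonneg _).trans (hbd z hz)
  have hC : 0 ≤ C := nonneg_of_mul_nonneg_left hCz hz0
  rcases le_or_gt |h| (z.im / 2) with hh | hh
  · have im_mem {w : ℂ} (hw : w ∈ ball z z.im) : 0 < w.im ∧ w.im < 2 * z.im := by
      have := (abs_im_le_norm _).trans_lt (mem_ball_iff_norm.1 hw)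
      rw [sub_im, abs_lt] at this
      constructor <;> linarith
    -- The summand `1` makes the bound positive even when `C = 0`.
    have hle : ∀ w ∈ ball z z.im, f w - f z ≤ (3 * C + 1) * z.im := fun w hw ↦ by
      have hw2 := mul_le_mul_of_nonneg_left (im_mem hw).2.le hC
      linarith [le_of_abs_le (hbd w (im_mem hw).1), neg_le_of_abs_le (hbd z hz)]
    have hmem : z + h ∈ ball z z.im := by
      simpa [mem_ball_iff_norm] using hh.trans_lt (half_lt_self hz0)
    calc f (z + h) - f z
        ≤ 2 * ((3 * C + 1) * z.im) * ‖z + h - z‖ / (z.im - ‖z + h - z‖) :=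
          sub_le_of_forall_mem_ball_sub_le (hf.mono fun w hw ↦ (im_mem hw).1)
            (by positivity) hle hmem
      _ = 2 * ((3 * C + 1) * z.im) * |h| / (z.im - |h|) := by simp
      _ ≤ 2 * ((3 * C + 1) * z.im) * |h| / (z.im / 2) := by gcongr; linarith
      _ = 4 * (3 * C + 1) * |h| := by field_simp; ring
  · have hzh := hbd (z + h) (by simpa using hz0)
    simp only [add_im, ofReal_im, add_zero] at hzh
    have hCh := mul_le_mul_of_nonneg_left hh.le hC
    linarith [le_of_abs_le hzh, neg_le_of_abs_le (hbd z hz), mul_nonneg hC (abs_nonneg h),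
      abs_nonneg h]

theorem translate_le_of_abs_le_mul_im (hf : HarmonicOnNhd f upperHalfPlaneSet)
    (hbd : ∀ z ∈ upperHalfPlaneSet, |f z| ≤ C * z.im) (h : ℝ) {z : ℂ}
    (hz : z ∈ upperHalfPlaneSet) : f (z + h) ≤ f z := by
  have translate_mem {w : ℂ} (hw : w ∈ upperHalfPlaneSet) : w + h ∈ upperHalfPlaneSet := by
    simpa using hw
  refine sub_nonpos.1 <| nonpos_of_forall_le_of_boundary_le (u := fun w ↦ f (w + h) - f w)
    (fun w hw ↦ (harmonicAt_comp_add_right (hf _ (translate_mem hw))).sub (hf w hw))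
    (fun w hw ↦ translate_sub_le_of_abs_le_mul_im hf hbd h hw) (fun ε hε ↦ ?_) hz
  have hlim : Tendsto (fun y ↦ 2 * C * y) (𝓝 0) (𝓝 0) :=
    Continuous.tendsto' (by fun_prop) _ _ (by simp)
  obtain ⟨δ, hδ, hle⟩ := Metric.eventually_nhds_iff.1 (hlim.eventually_le_const hε)
  refine ⟨δ, hδ, fun w hw hwδ ↦ ?_⟩
  have hwh := hbd (w + h) (translate_mem hw)
  simp only [add_im, ofReal_im, add_zero] at hwh
  have hsmall : 2 * C * w.im ≤ ε := hle (by simpa [abs_of_pos (show 0 < w.im from hw)] using hwδ)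
  linarith [le_of_abs_le hwh, neg_le_of_abs_le (hbd w hw)]

theorem eq_of_im_eq_of_abs_le_mul_im (hf : HarmonicOnNhd f upperHalfPlaneSet)
    (hbd : ∀ z ∈ upperHalfPlaneSet, |f z| ≤ C * z.im) {z w : ℂ}
    (hz : z ∈ upperHalfPlaneSet) (hzw : z.im = w.im) : f z = f w := by
  have le {z w : ℂ} (hz : z ∈ upperHalfPlaneSet) (hzw : z.im = w.im) : f w ≤ f z := by
    have hw : z + (w.re - z.re : ℝ) = w := Complex.ext (by simp) (by simpa using hzw)
    simpa only [hw] using translate_le_of_abs_le_mul_im hf hbd (w.re - z.re) hz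
  have hw : w ∈ upperHalfPlaneSet := by simpa [hzw] using hz
  exact le_antisymm (le hw hzw.symm) (le hz hzw)

end LinearGrowth

theorem HarmonicOnUpperHalf.harmonicOnNhd {H : ℝ → ℝ → ℝ} (hH : HarmonicOnUpperHalf H) :
    HarmonicOnNhd (fun z : ℂ ↦ H z.re z.im) upperHalfPlaneSet := by
  have hsmooth : ∀ z ∈ upperHalfPlaneSet, ContDiffAt ℝ 2 (fun z : ℂ ↦ H z.re z.im) z := by
    intro z hz
    have hopen : IsOpen UpperHalfSet := isOpen_lt continuous_const continuous_snd
    have hH' : ContDiffAt ℝ 2 (fun p : ℝ × ℝ ↦ H p.1 p.2) (z.re, z.im) :=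
      hH.1.contDiffAt (hopen.mem_nhds hz)
    exact ContDiffAt.comp z hH' (reCLM.contDiff.prodMk imCLM.contDiff).contDiffAt
  refine fun z hz ↦ ⟨hsmooth z hz, ?_⟩
  filter_upwards [isOpen_upperHalfPlaneSet.mem_nhds hz] with w hw
  rw [laplacian_eq_iteratedDeriv_two_add (hsmooth w hw)]
  simpa using hH.2 w.re w.im hw

theorem nonneg_harmonic_bounded_by_y_eq_mul_y_general {H : ℝ → ℝ → ℝ}
    (hH : HarmonicOnUpperHalf H) {C : ℝ} (hbd : ∀ x y : ℝ, 0 < y → |H x y| ≤ C * y) :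
    ∃ α : ℝ, ∀ x y : ℝ, 0 < y → H x y = α * y := by
  have hvert : ∀ x y : ℝ, 0 < y → H x y = H 0 y := fun x y hy ↦
    eq_of_im_eq_of_abs_le_mul_im hH.harmonicOnNhd (fun z hz ↦ hbd z.re z.im hz)
      (z := ⟨x, y⟩) (w := ⟨0, y⟩) hy rfl
  have hsmooth : ContDiffOn ℝ 2 (H 0) (Ioi 0) :=
    hH.1.comp (f := fun t : ℝ ↦ ((0 : ℝ), t)) (by fun_prop) fun _ ht ↦ ht
  have hderiv : ∀ y ∈ Ioi (0 : ℝ), iteratedDeriv 2 (H 0) y = 0 := fun y hy ↦ by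
    simpa [funext fun s ↦ hvert s y hy, iteratedDeriv_const] using hH.2 0 y hy
  obtain ⟨a, b, hab⟩ := exists_eq_smul_add_of_iteratedDeriv_two_eq_zero isOpen_Ioi
    isPreconnected_Ioi hsmooth hderiv
  have hb : b = 0 := eq_zero_of_forall_abs_mul_add_le_mul fun y hy ↦ hab y hy ▸ hbd 0 y hy
  exact ⟨a, fun x y hy ↦ by rw [hvert x y hy, hab y hy, hb, add_zero, smul_eq_mul, mul_comm]⟩

/-- **Lemma 4.1.** A nonnegative harmonic function `H` on the upper half-plane such that
`H(x,y) ≤ C·y` for some constant `C > 0` is of the form `H(x,y) = α·y` for some `α ≥ 0`. -/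
theorem nonneg_harmonic_bounded_by_y_eq_mul_y
    (H : ℝ → ℝ → ℝ) (hH : HarmonicOnUpperHalf H)
    (hnonneg : ∀ x y : ℝ, 0 < y → 0 ≤ H x y)
    (C : ℝ) (hC : 0 < C) (hbd : ∀ x y : ℝ, 0 < y → H x y ≤ C * y) :
    ∃ α : ℝ, 0 ≤ α ∧ ∀ x y : ℝ, 0 < y → H x y = α * y := by
  obtain ⟨α, hα⟩ := nonneg_harmonic_bounded_by_y_eq_mul_y_general hH fun x y hy ↦
    (abs_of_nonneg (hnonneg x y hy)).trans_le (hbd x y hy)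
  exact ⟨α, by simpa [hα] using hnonneg 0 1 one_pos, hα⟩
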